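/- arXiv:2111.03955 — 2 statements merged into one kernel-verified Lean document; each statement's English description precedes it below -/
import Mathlib

section
/- Let 0 < θ ≤ 1. There exists a constant C, depending only on θ, such that for every Schwartz vector field v = (v¹, v²) : ℝ² → ℝ² with div v = 0 and vorticity ω = ∂₁v² − ∂₂v¹, one has ‖v‖_{L^∞} ≤ C · ‖v‖_{L²}^{θ/(θ+1)} · [ω]_θ^{1/(θ+1)}. -/
open MeasureTheory ENNReal
open scoped RealInnerProductSpace

noncomputable section

/-- Shorthand for Euclidean space `ℝ^d`. -/
abbrev Ed (d : ℕ) := EuclideanSpace ℝ (Fin d)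

/-- The homogeneous Besov (Gagliardo) seminorm `[f]_{r,p}`. -/
def gagliardo (d : ℕ) (r p : ℝ) {F : Type*} [NormedAddCommGroup F] (f : Ed d → F) : ℝ≥0∞ :=
  (∫⁻ x, ∫⁻ y, (‖f x - f y‖₊ : ℝ≥0∞) ^ p / (‖x - y‖₊ : ℝ≥0∞) ^ (r * p + d)) ^ (1 / p)

/-- The homogeneous Hölder seminorm `{f}_r`. -/
def holderSemi (d : ℕ) (r : ℝ) {F : Type*} [NormedAddCommGroup F] (f : Ed d → F) : ℝ≥0∞ :=
  ⨆ x, ⨆ y, (‖f x - f y‖₊ : ℝ≥0∞) / (‖x - y‖₊ : ℝ≥0∞) ^ r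

/-- The Fourier transform `f̂(κ) = ∫ e^{-i x·κ} f(x) dx`. -/
def ftransform (d : ℕ) (f : Ed d → ℂ) (κ : Ed d) : ℂ :=
  ∫ x, Complex.exp (-(Complex.I * (⟪x, κ⟫ : ℂ))) * f x

/-- The homogeneous Sobolev seminorm `[f]_θ = ((2π)^{-d} ∫ |κ|^{2θ} |f̂(κ)|² dκ)^{1/2}`. -/
def sobolevSemi (d : ℕ) (θ : ℝ) (f : Ed d → ℂ) : ℝ≥0∞ :=
  (ENNReal.ofReal ((2 * Real.pi) ^ (-(d : ℝ))) *
    ∫⁻ κ, (‖κ‖₊ : ℝ≥0∞) ^ (2 * θ) * (‖ftransform d f κ‖₊ : ℝ≥0∞) ^ (2 : ℕ)) ^ ((1 : ℝ) / 2)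

/-- A symbol of class `S⁰_{ph}`: smooth away from the origin and positively
homogeneous of degree `0`. -/
def IsSymbol0 (d : ℕ) (a : Ed d → ℂ) : Prop :=
  ContDiffOn ℝ (⊤ : ℕ∞) a {0}ᶜ ∧ ∀ (c : ℝ) (κ : Ed d), 0 < c → κ ≠ 0 → a (c • κ) = a κ

/-- The operator `𝔞[f](x) = (2π)^{-d} ∫ e^{i x·κ} a(κ) f̂(κ) dκ` associated with a symbol. -/
def symbOp (d : ℕ) (a : Ed d → ℂ) (f : Ed d → ℂ) (x : Ed d) : ℂ :=
  (((2 * Real.pi) ^ (-(d : ℝ)) : ℝ) : ℂ) *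
    ∫ κ, Complex.exp (Complex.I * (⟪x, κ⟫ : ℂ)) * a κ * ftransform d f κ

/-- The partial derivative `∂_i f(x)`. -/
def pd (d : ℕ) (i : Fin d) (f : Ed d → ℝ) (x : Ed d) : ℝ :=
  fderiv ℝ f x (EuclideanSpace.single i 1)

/-- The half-wave propagator `(e^{itD} g)(x) = (2π)^{-d} ∫ e^{i x·κ} e^{i t|κ|} ĝ(κ) dκ`. -/
def halfWave (d : ℕ) (t : ℝ) (g : Ed d → ℂ) (x : Ed d) : ℂ :=
  (((2 * Real.pi) ^ (-(d : ℝ)) : ℝ) : ℂ) *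
    ∫ κ, Complex.exp (Complex.I * ((⟪x, κ⟫ : ℂ) + (t : ℂ) * ((‖κ‖ : ℝ) : ℂ))) *
      ftransform d g κ

end

open scoped NNReal FourierTransform SchwartzMap LineDeriv

/-! Fourier inversion bounds `‖f‖_∞` by `‖f̂‖_{L¹}`. Cauchy-Schwarz with the weight `1 + |cκ|^{2s}`,
optimized over `c > 0`, gives Carlson's inequality, which bounds `‖f̂‖_{L¹}` by weighted `L²` norms
of `f̂`; by Plancherel these are Sobolev norms of `f`, so
`‖f‖_∞ ≤ C ‖f‖₂^{1 - d/(2s)} [f]_s^{d/(2s)}` for `s > d/2`. In the plane, `κ · v̂ = 0` forces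
`|ω̂| = |κ| |v̂|`, so `[v]_{θ+1} = [ω]_θ`, and `s = θ + 1` gives the claim. -/

section Carlson

theorem sq_lintegral_le_lintegral_inv_mul_lintegral_mul_sq {α : Type*} [MeasurableSpace α]
    {μ : Measure α} {w g : α → ℝ≥0∞} (hw : Measurable w) (hg : Measurable g)
    (hw_zero : ∀ x, w x ≠ 0) (hw_top : ∀ x, w x ≠ ⊤) :
    (∫⁻ x, g x ∂μ) ^ 2 ≤ (∫⁻ x, (w x)⁻¹ ∂μ) * ∫⁻ x, w x * g x ^ 2 ∂μ := by
  have sqrt_sq (a : ℝ≥0∞) : (a ^ (1 / 2 : ℝ)) ^ 2 = a := by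
    rw [← ENNReal.rpow_natCast, ← ENNReal.rpow_mul]; simp
  have split (x : α) : (w x)⁻¹ ^ (1 / 2 : ℝ) * (w x ^ (1 / 2 : ℝ) * g x) = g x := by
    rw [← mul_assoc, ← ENNReal.mul_rpow_of_nonneg _ _ (by norm_num),
      ENNReal.inv_mul_cancel (hw_zero x) (hw_top x), ENNReal.one_rpow, one_mul]
  have holder := ENNReal.lintegral_mul_le_Lp_mul_Lq μ Real.HolderConjugate.two_two
    (f := fun x ↦ (w x)⁻¹ ^ (1 / 2 : ℝ)) (g := fun x ↦ w x ^ (1 / 2 : ℝ) * g x)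
    (by fun_prop) (by fun_prop)
  simp only [Pi.mul_apply, split, ENNReal.rpow_two, mul_pow, sqrt_sq] at holder
  calc (∫⁻ x, g x ∂μ) ^ 2
      ≤ ((∫⁻ x, (w x)⁻¹ ∂μ) ^ (1 / 2 : ℝ) * (∫⁻ x, w x * g x ^ 2 ∂μ) ^ (1 / 2 : ℝ)) ^ 2 := by
        gcongr
    _ = _ := by rw [mul_pow, sqrt_sq, sqrt_sq]

theorem exists_inv_pow_mul_add_rpow_mul_eq {a b : ℝ≥0∞} (ha : a ≠ 0) (hb : b ≠ 0) {n : ℕ}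
    (hn : 0 < n) {s : ℝ} (hs : n < s) :
    ∃ c : ℝ≥0, c ≠ 0 ∧ (c ^ n : ℝ≥0∞)⁻¹ * (a + (c : ℝ≥0∞) ^ s * b) =
      2 * (a ^ (1 - n / s) * b ^ (n / s)) := by
  have hs₀ : 0 < s := n.cast_nonneg.trans_lt hs
  have hα : 0 < n / s := by positivity
  have hβ : 0 < 1 - n / s := sub_pos.mpr ((div_lt_one hs₀).mpr hs)
  obtain rfl | ha_top := eq_or_ne a ⊤
  · exact ⟨1, one_ne_zero, by
      simp [ENNReal.top_rpow_of_pos hβ, ENNReal.top_mul, ENNReal.mul_top, hb, hα.not_gt]⟩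
  obtain rfl | hb_top := eq_or_ne b ⊤
  · exact ⟨1, one_ne_zero, by
      simp [ENNReal.top_rpow_of_pos hα, ENNReal.mul_top, ha, hβ.not_gt]⟩
  lift a to ℝ≥0 using ha_top
  lift b to ℝ≥0 using hb_top
  rw [ENNReal.coe_ne_zero] at ha hb
  have hc : (a / b) ^ (1 / s) ≠ 0 := by simp [ha, hb]
  refine ⟨(a / b) ^ (1 / s), hc, ?_⟩
  have hcs : ((a / b) ^ (1 / s)) ^ s * b = a := by
    rw [← NNReal.rpow_mul, one_div_mul_cancel hs₀.ne', NNReal.rpow_one, div_mul_cancel₀ a hb]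
  have hcn : ((a / b) ^ (1 / s)) ^ n = a ^ (n / s) / b ^ (n / s) := by
    rw [← NNReal.rpow_mul_natCast, one_div_mul_eq_div, NNReal.div_rpow]
  rw [← ENNReal.coe_rpow_of_nonneg _ hs₀.le, ← ENNReal.coe_rpow_of_nonneg _ hα.le,
    ← ENNReal.coe_rpow_of_nonneg _ hβ.le, ← ENNReal.coe_pow, ← ENNReal.coe_inv (pow_ne_zero n hc)]
  norm_cast
  rw [hcs, hcn, NNReal.rpow_sub ha, NNReal.rpow_one, inv_div]
  ring

variable {E : Type*} [NormedAddCommGroup E] [NormedSpace ℝ E] [FiniteDimensional ℝ E]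
  [MeasurableSpace E] [BorelSpace E] (μ : Measure E) [μ.IsAddHaarMeasure]

theorem lintegral_comp_smul_addHaar {f : E → ℝ≥0∞} (hf : Measurable f) {c : ℝ≥0} (hc : c ≠ 0) :
    ∫⁻ x, f (c • x) ∂μ = (c ^ Module.finrank ℝ E : ℝ≥0∞)⁻¹ * ∫⁻ x, f x ∂μ := by
  have hc' : (c : ℝ) ≠ 0 := NNReal.coe_ne_zero.mpr hc
  simp only [NNReal.smul_def]
  rw [← lintegral_map hf (measurable_const_smul (c : ℝ)), Measure.map_addHaar_smul μ hc',
    lintegral_smul_measure, smul_eq_mul, abs_of_nonneg (by positivity), ← NNReal.coe_pow,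
    ← NNReal.coe_inv, ENNReal.ofReal_coe_nnreal, ENNReal.coe_inv (pow_ne_zero _ hc),
    ENNReal.coe_pow]

theorem lintegral_inv_one_add_enorm_rpow_lt_top {s : ℝ} (hs₁ : 1 ≤ s)
    (hs : Module.finrank ℝ E < s) : ∫⁻ x, (1 + ‖x‖ₑ ^ s)⁻¹ ∂μ < ⊤ := by
  have bound (x : E) :
      (1 + ‖x‖ₑ ^ s)⁻¹ ≤ 2 ^ (s - 1) * ENNReal.ofReal ((1 + ‖x‖) ^ (-s)) := by
    have convex := ENNReal.rpow_add_le_mul_rpow_add_rpow 1 ‖x‖ₑ hs₁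
    rw [ENNReal.one_rpow] at convex
    rw [← ENNReal.ofReal_rpow_of_pos (by positivity), ENNReal.ofReal_add zero_le_one
      (norm_nonneg x), ENNReal.ofReal_one, ofReal_norm, ENNReal.rpow_neg, ← div_eq_mul_inv,
      ENNReal.le_div_iff_mul_le (by simp) (by simp), mul_comm, ← div_eq_mul_inv]
    exact ENNReal.div_le_of_le_mul convex
  calc ∫⁻ x, (1 + ‖x‖ₑ ^ s)⁻¹ ∂μ
      ≤ 2 ^ (s - 1) * ∫⁻ x, ENNReal.ofReal ((1 + ‖x‖) ^ (-s)) ∂μ := by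
        rw [← lintegral_const_mul _ (by fun_prop)]
        exact lintegral_mono bound
    _ < ⊤ := ENNReal.mul_lt_top (by finiteness) (finite_integral_one_add_norm hs)

theorem sq_lintegral_le_of_dilation {g : E → ℝ≥0∞} (hg : Measurable g) {s : ℝ} (hs : 0 ≤ s)
    {c : ℝ≥0} (hc : c ≠ 0) :
    (∫⁻ x, g x ∂μ) ^ 2 ≤ (∫⁻ x, (1 + ‖x‖ₑ ^ s)⁻¹ ∂μ) * ((c ^ Module.finrank ℝ E : ℝ≥0∞)⁻¹ *
      ((∫⁻ x, g x ^ 2 ∂μ) + (c : ℝ≥0∞) ^ s * ∫⁻ x, ‖x‖ₑ ^ s * g x ^ 2 ∂μ)) := by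
  have weighted := sq_lintegral_le_lintegral_inv_mul_lintegral_mul_sq (μ := μ)
    (w := fun x ↦ 1 + ‖c • x‖ₑ ^ s) (by fun_prop) hg (fun x ↦ by simp) (fun x ↦ by finiteness)
  have expand : ∫⁻ x, (1 + ‖c • x‖ₑ ^ s) * g x ^ 2 ∂μ =
      (∫⁻ x, g x ^ 2 ∂μ) + (c : ℝ≥0∞) ^ s * ∫⁻ x, ‖x‖ₑ ^ s * g x ^ 2 ∂μ := by
    rw [← lintegral_const_mul _ (by fun_prop), ← lintegral_add_left (by fun_prop)]
    refine lintegral_congr fun x ↦ ?_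
    rw [NNReal.smul_def, enorm_smul, ENNReal.mul_rpow_of_nonneg _ _ hs, add_mul, one_mul, mul_assoc,
      Real.enorm_of_nonneg c.coe_nonneg, ENNReal.ofReal_coe_nnreal]
  rw [expand, lintegral_comp_smul_addHaar μ (f := fun x ↦ (1 + ‖x‖ₑ ^ s)⁻¹) (by fun_prop) hc]
    at weighted
  exact weighted.trans_eq (by ring)

theorem lintegral_enorm_rpow_mul_sq_eq_zero_iff [Nontrivial E] {g : E → ℝ≥0∞} (hg : Measurable g)
    {s : ℝ} (hs : 0 ≤ s) : ∫⁻ x, ‖x‖ₑ ^ s * g x ^ 2 ∂μ = 0 ↔ g =ᵐ[μ] 0 := by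
  have weight_ne_zero : ∀ᵐ x ∂μ, ‖x‖ₑ ^ s ≠ 0 := by
    filter_upwards [Measure.ae_ne μ 0] with x hx
    simp [hx, hs.not_gt]
  rw [lintegral_eq_zero_iff (by fun_prop)]
  refine Filter.eventually_congr (weight_ne_zero.mono fun x hx ↦ ?_)
  simp [hx]

theorem exists_sq_lintegral_le_mul_rpow_mul_rpow [Nontrivial E] {s : ℝ}
    (hs : Module.finrank ℝ E < s) :
    ∃ C : ℝ≥0, ∀ g : E → ℝ≥0∞, Measurable g →
      (∫⁻ x, g x ∂μ) ^ 2 ≤ C * ((∫⁻ x, g x ^ 2 ∂μ) ^ (1 - Module.finrank ℝ E / s) *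
        (∫⁻ x, ‖x‖ₑ ^ s * g x ^ 2 ∂μ) ^ (Module.finrank ℝ E / s)) := by
  have hn : 0 < Module.finrank ℝ E := Module.finrank_pos
  have hs₁ : 1 ≤ s := le_trans (mod_cast hn) hs.le
  have hs₀ : 0 ≤ s := zero_le_one.trans hs₁
  lift ∫⁻ x, (1 + ‖x‖ₑ ^ s)⁻¹ ∂μ to ℝ≥0
    using (lintegral_inv_one_add_enorm_rpow_lt_top μ hs₁ hs).ne with K hK
  refine ⟨K * 2, fun g hg ↦ ?_⟩
  by_cases hg₀ : g =ᵐ[μ] 0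
  · simp [lintegral_congr_ae hg₀]
  have hA : ∫⁻ x, g x ^ 2 ∂μ ≠ 0 := by
    simpa using (lintegral_enorm_rpow_mul_sq_eq_zero_iff μ hg le_rfl).not.mpr hg₀
  have hB : ∫⁻ x, ‖x‖ₑ ^ s * g x ^ 2 ∂μ ≠ 0 :=
    (lintegral_enorm_rpow_mul_sq_eq_zero_iff μ hg hs₀).not.mpr hg₀
  obtain ⟨c, hc, hbalance⟩ := exists_inv_pow_mul_add_rpow_mul_eq hA hB hn hs
  rw [ENNReal.coe_mul, ENNReal.coe_ofNat, mul_assoc, ← hbalance, hK]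
  exact sq_lintegral_le_of_dilation μ hg hs₀ hc

end Carlson

section Fourier

variable {V : Type*} [NormedAddCommGroup V] [InnerProductSpace ℝ V] [FiniteDimensional ℝ V]
  [MeasurableSpace V] [BorelSpace V]

theorem lintegral_enorm_sq_fourier {H : Type*} [NormedAddCommGroup H] [InnerProductSpace ℂ H]
    [CompleteSpace H] (f : 𝓢(V, H)) :
    ∫⁻ ξ, ‖𝓕 f ξ‖ₑ ^ 2 = ∫⁻ x, ‖f x‖ₑ ^ 2 := by
  have lintegral_eq (g : 𝓢(V, H)) :
      ∫⁻ x, ‖g x‖ₑ ^ 2 = ENNReal.ofReal (∫ x, ‖g x‖ ^ 2) := by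
    have hint : Integrable (fun x ↦ ‖g x‖ ^ 2) := (g.memLp 2).integrable_norm_pow two_ne_zero
    rw [ofReal_integral_eq_lintegral_ofReal hint (.of_forall fun x ↦ sq_nonneg _)]
    simp [ENNReal.ofReal_pow]
  rw [lintegral_eq, lintegral_eq, SchwartzMap.integral_norm_sq_fourier]

theorem enorm_le_lintegral_enorm_fourier {F : Type*} [NormedAddCommGroup F] [NormedSpace ℂ F]
    [CompleteSpace F] (f : 𝓢(V, F)) (x : V) :
    ‖f x‖ₑ ≤ ∫⁻ ξ, ‖𝓕 f ξ‖ₑ := by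
  have enorm_exp (t : ℝ) : ‖Complex.exp (t * Complex.I)‖ₑ = 1 := by
    rw [← ofReal_norm, Complex.norm_exp_ofReal_mul_I, ENNReal.ofReal_one]
  calc ‖f x‖ₑ = ‖𝓕⁻ (𝓕 f) x‖ₑ := by rw [FourierTransform.fourierInv_fourier_eq]
    _ ≤ ∫⁻ ξ, ‖𝓕 f ξ‖ₑ := by
      rw [SchwartzMap.fourierInv_coe, Real.fourierInv_eq']
      refine (enorm_integral_le_lintegral_enorm _).trans_eq (lintegral_congr fun ξ ↦ ?_)
      rw [enorm_smul, enorm_exp, one_mul]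

end Fourier

section Sobolev

variable {d : ℕ}

theorem ftransform_eq_fourier (f : Ed d → ℂ) (κ : Ed d) :
    ftransform d f κ = 𝓕 f ((2 * Real.pi)⁻¹ • κ) := by
  rw [Real.fourier_eq', ftransform]
  refine integral_congr_ae (.of_forall fun x ↦ ?_)
  have hpi : (Real.pi : ℂ) ≠ 0 := mod_cast Real.pi_ne_zero
  simp only [inner_smul_right, smul_eq_mul]
  congr 2
  push_cast
  field_simp

theorem measurable_ftransform (f : 𝓢(Ed d, ℂ)) : Measurable (ftransform d f) := by
  simp only [funext (ftransform_eq_fourier (d := d) f), ← SchwartzMap.fourier_coe]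
  exact (𝓕 f).continuous.measurable.comp (measurable_const_smul _)

theorem ftransform_add (f g : 𝓢(Ed d, ℂ)) (κ : Ed d) :
    ftransform d (f + g : 𝓢(Ed d, ℂ)) κ = ftransform d f κ + ftransform d g κ := by
  simp only [ftransform_eq_fourier, ← SchwartzMap.fourier_coe, FourierTransform.fourier_add,
    _root_.add_apply]

theorem ftransform_sub (f g : 𝓢(Ed d, ℂ)) (κ : Ed d) :
    ftransform d (f - g : 𝓢(Ed d, ℂ)) κ = ftransform d f κ - ftransform d g κ := by
  simp only [ftransform_eq_fourier, ← SchwartzMap.fourier_coe, sub_eq_add_neg,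
    FourierTransform.fourier_add, FourierTransform.fourier_neg, _root_.add_apply,
    _root_.neg_apply]

theorem ftransform_lineDerivOp (f : 𝓢(Ed d, ℂ)) (m κ : Ed d) :
    ftransform d (∂_{m} f : 𝓢(Ed d, ℂ)) κ = Complex.I * (⟪κ, m⟫ * ftransform d f κ) := by
  have hm : (inner ℝ · m : Ed d → ℝ).HasTemperateGrowth :=
    ((innerSL ℝ).flip m).hasTemperateGrowth
  have hpi : (Real.pi : ℂ) ≠ 0 := mod_cast Real.pi_ne_zero
  rw [ftransform_eq_fourier, ftransform_eq_fourier, ← SchwartzMap.fourier_coe,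
    ← SchwartzMap.fourier_coe, SchwartzMap.fourier_lineDerivOp_eq, _root_.smul_apply,
    SchwartzMap.smulLeftCLM_apply_apply hm, real_inner_smul_left]
  simp only [smul_eq_mul, Complex.real_smul]
  push_cast
  field_simp

theorem lintegral_eq_mul_lintegral_comp_inv_two_pi_smul {F : Ed d → ℝ≥0∞} (hF : Measurable F) :
    ∫⁻ ξ, F ξ = ENNReal.ofReal ((2 * Real.pi) ^ (-(d : ℝ))) *
      ∫⁻ κ, F ((2 * Real.pi)⁻¹ • κ) := by
  set c : ℝ≥0 := (2 * NNReal.pi)⁻¹ with hc_def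
  have hc : c ≠ 0 := by simp [hc_def, NNReal.pi_ne_zero]
  have hconst : ENNReal.ofReal ((2 * Real.pi) ^ (-(d : ℝ))) = (c : ℝ≥0∞) ^ d := by
    rw [Real.rpow_neg (by positivity), Real.rpow_natCast, ← inv_pow,
      ENNReal.ofReal_pow (by positivity), show (2 * Real.pi)⁻¹ = (c : ℝ) by simp [hc_def],
      ENNReal.ofReal_coe_nnreal]
  have scaling := lintegral_comp_smul_addHaar volume hF hc
  simp only [finrank_euclideanSpace_fin, NNReal.smul_def] at scaling
  rw [hconst, show (2 * Real.pi)⁻¹ = (c : ℝ) by simp [hc_def], scaling, ← mul_assoc,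
    ENNReal.mul_inv_cancel (by simp [hc]) (by finiteness), one_mul]

theorem enorm_le_lintegral_enorm_ftransform (f : 𝓢(Ed d, ℂ)) (x : Ed d) :
    ‖f x‖ₑ ≤ ENNReal.ofReal ((2 * Real.pi) ^ (-(d : ℝ))) * ∫⁻ κ, ‖ftransform d f κ‖ₑ := by
  simp only [ftransform_eq_fourier, ← SchwartzMap.fourier_coe]
  rw [← lintegral_eq_mul_lintegral_comp_inv_two_pi_smul (F := fun ξ ↦ ‖𝓕 f ξ‖ₑ)
    (𝓕 f).continuous.enorm.measurable]
  exact enorm_le_lintegral_enorm_fourier f x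

theorem sq_sobolevSemi (s : ℝ) (f : Ed d → ℂ) :
    sobolevSemi d s f ^ 2 = ENNReal.ofReal ((2 * Real.pi) ^ (-(d : ℝ))) *
      ∫⁻ κ, ‖κ‖ₑ ^ (2 * s) * ‖ftransform d f κ‖ₑ ^ 2 := by
  rw [sobolevSemi, ← ENNReal.rpow_two, ← ENNReal.rpow_mul, one_div_mul_cancel two_ne_zero,
    ENNReal.rpow_one]
  rfl

theorem sq_eLpNorm_two {α F : Type*} [MeasurableSpace α] [NormedAddCommGroup F] (μ : Measure α)
    (f : α → F) : eLpNorm f 2 μ ^ 2 = ∫⁻ x, ‖f x‖ₑ ^ 2 ∂μ := by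
  simpa using eLpNorm_nnreal_pow_eq_lintegral (μ := μ) (f := f) (p := 2) two_ne_zero

theorem sobolevSemi_zero (f : 𝓢(Ed d, ℂ)) : sobolevSemi d 0 f = eLpNorm f 2 volume := by
  have hmeas : Measurable fun ξ ↦ ‖𝓕 f ξ‖ₑ := (𝓕 f).continuous.enorm.measurable
  refine (ENNReal.pow_right_strictMono two_ne_zero).injective ?_
  simp only [sq_sobolevSemi, sq_eLpNorm_two, mul_zero, ENNReal.rpow_zero, one_mul,
    ftransform_eq_fourier, ← SchwartzMap.fourier_coe]
  rw [← lintegral_eq_mul_lintegral_comp_inv_two_pi_smul (hmeas.pow_const 2),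
    lintegral_enorm_sq_fourier]

theorem exists_enorm_le_mul_eLpNorm_rpow_mul_sobolevSemi_rpow [NeZero d] {s : ℝ}
    (hs : d < 2 * s) :
    ∃ C : ℝ≥0, ∀ (f : 𝓢(Ed d, ℂ)) (x : Ed d),
      ‖f x‖ₑ ≤ C * eLpNorm f 2 volume ^ (1 - d / (2 * s)) * sobolevSemi d s f ^ (d / (2 * s)) := by
  have hs₀ : 0 < 2 * s := d.cast_nonneg.trans_lt hs
  have hα : 0 ≤ d / (2 * s) := by positivity
  have hβ : 0 ≤ 1 - d / (2 * s) := sub_nonneg.mpr ((div_le_one hs₀).mpr hs.le)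
  obtain ⟨C, carlson⟩ := exists_sq_lintegral_le_mul_rpow_mul_rpow (E := Ed d) volume
    (s := 2 * s) (by simpa using hs)
  simp only [finrank_euclideanSpace_fin] at carlson
  set c : ℝ≥0 := ((2 * Real.pi) ^ (-(d : ℝ))).toNNReal
  have hc : (c : ℝ≥0∞) ≠ 0 := (ENNReal.ofReal_pos.mpr (by positivity)).ne'
  refine ⟨NNReal.sqrt (c * C), fun f x ↦ ?_⟩
  set A := ∫⁻ κ, ‖ftransform d f κ‖ₑ ^ 2
  set B := ∫⁻ κ, ‖κ‖ₑ ^ (2 * s) * ‖ftransform d f κ‖ₑ ^ 2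
  have hN : eLpNorm f 2 volume ^ 2 = c * A := by
    rw [← sobolevSemi_zero, sq_sobolevSemi]; simp [A, c, ENNReal.ofReal]
  have hS : sobolevSemi d s f ^ 2 = c * B := sq_sobolevSemi s f
  rw [← ENNReal.pow_le_pow_left_iff two_ne_zero]
  have hcc : (c : ℝ≥0∞) ^ (1 - d / (2 * s)) * (c : ℝ≥0∞) ^ (d / (2 * s)) = c := by
    rw [← ENNReal.rpow_add _ _ hc ENNReal.coe_ne_top, sub_add_cancel, ENNReal.rpow_one]
  calc ‖f x‖ₑ ^ 2 ≤ (c * ∫⁻ κ, ‖ftransform d f κ‖ₑ) ^ 2 := by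
        gcongr; exact enorm_le_lintegral_enorm_ftransform f x
    _ ≤ c ^ 2 * (C * (A ^ (1 - d / (2 * s)) * B ^ (d / (2 * s)))) := by
        rw [mul_pow]; gcongr; exact carlson _ (measurable_ftransform f).enorm
    _ = c * C * ((c * A) ^ (1 - d / (2 * s)) * (c * B) ^ (d / (2 * s))) := by
        rw [ENNReal.mul_rpow_of_nonneg _ _ hβ, ENNReal.mul_rpow_of_nonneg _ _ hα, sq]
        nth_rw 2 [← hcc]
        ring
    _ = _ := by
        rw [← hN, ← hS, mul_pow, mul_pow, ← ENNReal.coe_pow, NNReal.sq_sqrt, ENNReal.coe_mul,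
          mul_assoc (c * C : ℝ≥0∞)]
        simp only [← ENNReal.rpow_natCast, ← ENNReal.rpow_mul, mul_comm]

end Sobolev

section BiotSavart

/-- The `j`-th component of a real Schwartz vector field, complexified so that its Fourier
transform can be taken. -/
noncomputable def complexComponent {d n : ℕ} (v : 𝓢(Ed d, Ed n)) (j : Fin n) : 𝓢(Ed d, ℂ) :=
  SchwartzMap.postcompCLM (𝕜 := ℝ) (Complex.ofRealCLM ∘L EuclideanSpace.proj j) v

theorem lineDerivOp_complexComponent_apply {d n : ℕ} (v : 𝓢(Ed d, Ed n)) (i : Fin d) (j : Fin n)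
    (x : Ed d) :
    ∂_{(EuclideanSpace.single i 1 : Ed d)} (complexComponent v j) x =
      (pd d i (fun y ↦ v y j) x : ℂ) := by
  have hv : HasFDerivAt (fun y ↦ v y j) (EuclideanSpace.proj j ∘L fderiv ℝ v x) x :=
    (EuclideanSpace.proj j : Ed n →L[ℝ] ℝ).hasFDerivAt.comp x (v.hasFDerivAt x)
  have hv' : HasFDerivAt (complexComponent v j)
      (Complex.ofRealCLM ∘L EuclideanSpace.proj j ∘L fderiv ℝ v x) x :=
    Complex.ofRealCLM.hasFDerivAt.comp x hv
  rw [SchwartzMap.lineDerivOp_apply_eq_fderiv, pd, hv.fderiv, hv'.fderiv]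
  rfl

theorem norm_complexComponent_apply {d n : ℕ} (v : 𝓢(Ed d, Ed n)) (j : Fin n) (x : Ed d) :
    ‖complexComponent v j x‖ = ‖v x j‖ :=
  Complex.norm_real _

theorem eLpNorm_complexComponent_le {d n : ℕ} (v : 𝓢(Ed d, Ed n)) (j : Fin n) (p : ℝ≥0∞) :
    eLpNorm (complexComponent v j) p volume ≤ eLpNorm v p volume :=
  eLpNorm_mono fun x ↦ by
    rw [norm_complexComponent_apply]
    exact PiLp.norm_apply_le (v x) j

/-- The divergence `∂₁v¹ + ∂₂v²` of a planar Schwartz field, as a complex Schwartz function. -/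
noncomputable def complexDivergence (v : 𝓢(Ed 2, Ed 2)) : 𝓢(Ed 2, ℂ) :=
  ∂_{(EuclideanSpace.single 0 1 : Ed 2)} (complexComponent v 0) +
    ∂_{(EuclideanSpace.single 1 1 : Ed 2)} (complexComponent v 1)

/-- The vorticity `∂₁v² - ∂₂v¹` of a planar Schwartz field, as a complex Schwartz function. -/
noncomputable def complexVorticity (v : 𝓢(Ed 2, Ed 2)) : 𝓢(Ed 2, ℂ) :=
  ∂_{(EuclideanSpace.single 0 1 : Ed 2)} (complexComponent v 1) -
    ∂_{(EuclideanSpace.single 1 1 : Ed 2)} (complexComponent v 0)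

theorem complexDivergence_apply (v : 𝓢(Ed 2, Ed 2)) (x : Ed 2) :
    complexDivergence v x = (pd 2 0 (fun y ↦ v y 0) x + pd 2 1 (fun y ↦ v y 1) x : ℝ) := by
  rw [complexDivergence, _root_.add_apply, lineDerivOp_complexComponent_apply,
    lineDerivOp_complexComponent_apply, Complex.ofReal_add]

theorem complexVorticity_apply (v : 𝓢(Ed 2, Ed 2)) (x : Ed 2) :
    complexVorticity v x = (pd 2 0 (fun y ↦ v y 1) x - pd 2 1 (fun y ↦ v y 0) x : ℝ) := by
  rw [complexVorticity, _root_.sub_apply, lineDerivOp_complexComponent_apply,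
    lineDerivOp_complexComponent_apply, Complex.ofReal_sub]

theorem norm_sq_smul_add_smul_add_norm_sq_smul_sub_smul {F : Type*} [NormedAddCommGroup F]
    [InnerProductSpace ℝ F] (p q : ℝ) (a b : F) :
    ‖p • a + q • b‖ ^ 2 + ‖p • b - q • a‖ ^ 2 = (p ^ 2 + q ^ 2) * (‖a‖ ^ 2 + ‖b‖ ^ 2) := by
  rw [norm_add_sq_real, norm_sub_sq_real]
  simp only [norm_smul, mul_pow, Real.norm_eq_abs, sq_abs, real_inner_smul_left,
    real_inner_smul_right, real_inner_comm a b]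
  ring

theorem norm_sq_ftransform_complexDivergence_add_complexVorticity (v : 𝓢(Ed 2, Ed 2)) (κ : Ed 2) :
    ‖ftransform 2 (complexDivergence v) κ‖ ^ 2 + ‖ftransform 2 (complexVorticity v) κ‖ ^ 2 =
      ‖κ‖ ^ 2 * (‖ftransform 2 (complexComponent v 0) κ‖ ^ 2 +
        ‖ftransform 2 (complexComponent v 1) κ‖ ^ 2) := by
  rw [complexDivergence, complexVorticity, ftransform_add, ftransform_sub]
  simp only [ftransform_lineDerivOp, ← mul_add, ← mul_sub, norm_mul, Complex.norm_I, one_mul,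
    EuclideanSpace.inner_single_right, conj_trivial, ← Complex.real_smul]
  rw [norm_sq_smul_add_smul_add_norm_sq_smul_sub_smul, EuclideanSpace.norm_sq_eq,
    Fin.sum_univ_two]
  simp only [Real.norm_eq_abs, sq_abs]

theorem enorm_sq_mul_enorm_sq_ftransform_complexComponent_le {v : 𝓢(Ed 2, Ed 2)}
    (hv : complexDivergence v = 0) (j : Fin 2) (κ : Ed 2) :
    ‖κ‖ₑ ^ 2 * ‖ftransform 2 (complexComponent v j) κ‖ₑ ^ 2 ≤
      ‖ftransform 2 (complexVorticity v) κ‖ₑ ^ 2 := by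
  have hdiv : ftransform 2 (complexDivergence v) κ = 0 := by simp [hv, ftransform]
  have identity := norm_sq_ftransform_complexDivergence_add_complexVorticity v κ
  rw [hdiv, norm_zero, zero_pow two_ne_zero, zero_add] at identity
  simp only [← ofReal_norm]
  rw [← ENNReal.ofReal_pow (norm_nonneg _), ← ENNReal.ofReal_pow (norm_nonneg _),
    ← ENNReal.ofReal_pow (norm_nonneg _), ← ENNReal.ofReal_mul (by positivity), identity]
  gcongr
  fin_cases j <;> simp

theorem sobolevSemi_complexComponent_le {v : 𝓢(Ed 2, Ed 2)} (hv : complexDivergence v = 0)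
    (θ : ℝ) (j : Fin 2) :
    sobolevSemi 2 (θ + 1) (complexComponent v j) ≤ sobolevSemi 2 θ (complexVorticity v) := by
  rw [← ENNReal.pow_le_pow_left_iff two_ne_zero, sq_sobolevSemi, sq_sobolevSemi]
  refine mul_le_mul_right (lintegral_mono_ae ?_) _
  filter_upwards [Measure.ae_ne volume 0] with κ hκ
  rw [mul_add, mul_one, ENNReal.rpow_add _ _ (by simpa using hκ) enorm_ne_top, ENNReal.rpow_two,
    mul_assoc]
  gcongr
  exact enorm_sq_mul_enorm_sq_ftransform_complexComponent_le hv j κ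

end BiotSavart

theorem enorm_le_sum_enorm_apply {ι : Type*} [Fintype ι] (x : EuclideanSpace ℝ ι) :
    ‖x‖ₑ ≤ ∑ i, ‖x i‖ₑ := by
  classical
  conv_lhs => rw [← (EuclideanSpace.basisFun ι ℝ).sum_repr x]
  refine (enorm_sum_le _ _).trans_eq (Finset.sum_congr rfl fun i _ ↦ ?_)
  rw [enorm_smul, ← ofReal_norm (EuclideanSpace.basisFun ι ℝ i), OrthonormalBasis.norm_eq_one,
    ENNReal.ofReal_one, mul_one, EuclideanSpace.basisFun_repr]

theorem stmt10_general (θ : ℝ) (hθ : 0 < θ) :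
    ∃ C : ℝ, 0 < C ∧ ∀ v : SchwartzMap (Ed 2) (Ed 2),
      (∀ x, pd 2 0 (fun y => v y 0) x + pd 2 1 (fun y => v y 1) x = 0) →
      (⨆ x, (‖v x‖₊ : ℝ≥0∞))
        ≤ ENNReal.ofReal C * eLpNorm (⇑v) 2 volume ^ (θ / (θ + 1)) *
          sobolevSemi 2 θ
            (fun x => ((pd 2 0 (fun y => v y 1) x - pd 2 1 (fun y => v y 0) x : ℝ) : ℂ))
              ^ (1 / (θ + 1)) := by
  obtain ⟨C, agmon⟩ := exists_enorm_le_mul_eLpNorm_rpow_mul_sobolevSemi_rpow (d := 2) (s := θ + 1)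
    (by push_cast; linarith)
  have hα : ((2 : ℕ) : ℝ) / (2 * (θ + 1)) = 1 / (θ + 1) := by push_cast; field_simp
  have hβ : 1 - 1 / (θ + 1) = θ / (θ + 1) := by field_simp; ring
  rw [hα, hβ] at agmon
  refine ⟨2 * C + 1, by positivity, fun v hv ↦ iSup_le fun x ↦ ?_⟩
  have hdiv : complexDivergence v = 0 := by
    ext x
    rw [complexDivergence_apply, hv, Complex.ofReal_zero, _root_.zero_apply]
  rw [← funext (complexVorticity_apply v)]
  set M := eLpNorm v 2 volume ^ (θ / (θ + 1)) *
    sobolevSemi 2 θ (complexVorticity v) ^ (1 / (θ + 1)) with hM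
  have component_le (j : Fin 2) : ‖v x j‖ₑ ≤ C * M := by
    rw [← ofReal_norm, ← norm_complexComponent_apply, ofReal_norm, hM, ← mul_assoc]
    refine (agmon (complexComponent v j) x).trans ?_
    gcongr
    · exact eLpNorm_complexComponent_le v j 2
    · exact sobolevSemi_complexComponent_le hdiv θ j
  calc ‖v x‖ₑ ≤ ∑ j, ‖v x j‖ₑ := enorm_le_sum_enorm_apply (v x)
    _ ≤ ∑ _j : Fin 2, C * M := by gcongr with j; exact component_le j
    _ = 2 * C * M := by simp [mul_assoc]
    _ ≤ ENNReal.ofReal (2 * C + 1) * M := by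
      gcongr
      rw [ENNReal.ofReal_add (by positivity) zero_le_one, ENNReal.ofReal_mul zero_le_two]
      simp
    _ = _ := by rw [hM, mul_assoc]

/-- For a divergence-free Schwartz vector field `v` on `ℝ²` with vorticity
`ω` and `0 < θ ≤ 1`: `‖v‖_∞ ≤ C ‖v‖₂^{θ/(θ+1)} [ω]_θ^{1/(θ+1)}`. -/
theorem stmt10 (θ : ℝ) (hθ0 : 0 < θ) (hθ1 : θ ≤ 1) :
    ∃ C : ℝ, 0 < C ∧ ∀ v : SchwartzMap (Ed 2) (Ed 2),
      (∀ x, pd 2 0 (fun y => v y 0) x + pd 2 1 (fun y => v y 1) x = 0) →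
      (⨆ x, (‖v x‖₊ : ℝ≥0∞))
        ≤ ENNReal.ofReal C * eLpNorm (⇑v) 2 volume ^ (θ / (θ + 1)) *
          sobolevSemi 2 θ
            (fun x => ((pd 2 0 (fun y => v y 1) x - pd 2 1 (fun y => v y 0) x : ℝ) : ℂ))
              ^ (1 / (θ + 1)) :=
  stmt10_general θ hθ0
end

section
/- Let 0 < r < 1 and 2 ≤ p < ∞ with h := r − 3/p > 0. There exists a constant C, depending only on r and p, such that for every Schwartz vector field v : ℝ³ → ℝ³ with div v = 0 and vorticity components ω^{mn} = ∂_m v^n − ∂_n v^m, one has ‖v‖_{L^∞} ≤ C · ‖v‖_{L²}^{(h+1)/(h+5/2)} · (max_{m,n} [ω^{mn}]_{r,p})^{(3/2)/(h+5/2)}. -/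
open MeasureTheory ENNReal
open scoped RealInnerProductSpace

/-!
Average a component `v^n` around `x` at scale `t` against the kernel `φ(y) = (1 - |y|²)₊`. The
`t`-derivative of the average has integrand `φ(y) ∑ m, y_m ∂_m v^n(x + t y)`. Since
`y φ(y) = -∇(φ²) / 4`, an integration by parts and `div v = 0` show that
`∫ φ(y) ∑ m, y_m ∂_n v^m(x + t y) dy = 0`, so `∂_m v^n` may be replaced by `ω^{mn}`. The kernels
`y_m φ(y)` have mean zero, so Morrey's argument bounds the derivative by a multiple of
`t^(r - d/p) [ω]_{r,p}`. Integrating over `0 < t < R` compares `v^n(x)` with its average at scale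
`R`, which is at most a multiple of `R^(-d/q) ‖v‖_q`; the theorem follows by choosing the `R` that
balances the two bounds.
-/

section Rescaling

variable {E F : Type*} [NormedAddCommGroup E] [NormedSpace ℝ E] [FiniteDimensional ℝ E]
  [MeasurableSpace E] [BorelSpace E] [NormedAddCommGroup F]

theorem lintegral_comp_add_smul (μ : Measure E) [μ.IsAddHaarMeasure] (f : E → ℝ≥0∞) (x : E)
    {t : ℝ} (ht : 0 < t) :
    ∫⁻ y, f (x + t • y) ∂μ =
      ENNReal.ofReal t ^ (-(Module.finrank ℝ E : ℝ)) * ∫⁻ y, f y ∂μ := by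
  have hmap : ∫⁻ y, f (x + t • y) ∂μ = ∫⁻ y, f (x + y) ∂(μ.map (t • ·)) :=
    (lintegral_map_equiv (fun y => f (x + y))
      (Homeomorph.smulOfNeZero t ht.ne').toMeasurableEquiv).symm
  rw [hmap, Measure.map_addHaar_smul _ ht.ne', lintegral_smul_measure, lintegral_add_left_eq_self,
    smul_eq_mul, abs_of_pos (by positivity), ENNReal.ofReal_rpow_of_pos ht, Real.rpow_neg ht.le,
    Real.rpow_natCast]

theorem eLpNorm_comp_add_smul (μ : Measure E) [μ.IsAddHaarMeasure] (f : E → F) (x : E)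
    {t : ℝ} (ht : 0 < t) {q : ℝ≥0∞} (hq0 : q ≠ 0) (hq : q ≠ ⊤) :
    eLpNorm (fun y => f (x + t • y)) q μ =
      ENNReal.ofReal t ^ (-(Module.finrank ℝ E / q.toReal)) * eLpNorm f q μ := by
  simp only [eLpNorm_eq_lintegral_rpow_enorm_toReal hq0 hq]
  rw [lintegral_comp_add_smul μ (fun y => ‖f y‖ₑ ^ q.toReal) x ht,
    ENNReal.mul_rpow_of_nonneg _ _ (by positivity), ← ENNReal.rpow_mul, neg_mul, mul_one_div]

theorem gagliardo_comp_add_smul {d : ℕ} {r p : ℝ} (hp : 0 < p) (f : Ed d → F) (x : Ed d)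
    {t : ℝ} (ht : 0 < t) :
    gagliardo d r p (fun y => f (x + t • y)) =
      ENNReal.ofReal t ^ (r - d / p) * gagliardo d r p f := by
  set T := ENNReal.ofReal t
  have hT0 : T ≠ 0 := by simpa [T] using ht
  have hT : T ≠ ⊤ := ENNReal.ofReal_ne_top
  set s := r * p + d with hs
  have hTs0 : T ^ s ≠ 0 := (ENNReal.rpow_pos hT0.bot_lt hT).ne'
  have hTs : T ^ s ≠ ⊤ := ENNReal.rpow_ne_top_of_ne_zero hT0 hT
  have hscale (g : Ed d → ℝ≥0∞) : ∫⁻ y, g (x + t • y) = T ^ (-(d : ℝ)) * ∫⁻ y, g y := by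
    simpa using lintegral_comp_add_smul volume g x ht
  have hkernel (z y : Ed d) :
      (‖f (x + t • z) - f (x + t • y)‖₊ : ℝ≥0∞) ^ p / (‖z - y‖₊ : ℝ≥0∞) ^ s =
        T ^ s * ((‖f (x + t • z) - f (x + t • y)‖₊ : ℝ≥0∞) ^ p /
          (‖x + t • z - (x + t • y)‖₊ : ℝ≥0∞) ^ s) := by
    have hnorm : (‖x + t • z - (x + t • y)‖₊ : ℝ≥0∞) = T * ‖z - y‖₊ := by
      rw [add_sub_add_left_eq_sub, ← smul_sub, ← enorm_eq_nnnorm, enorm_smul,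
        Real.enorm_of_nonneg ht.le, enorm_eq_nnnorm]
    rw [hnorm, ENNReal.mul_rpow_of_ne_top hT ENNReal.coe_ne_top, ← mul_div_assoc,
      ENNReal.mul_div_mul_left _ _ hTs0 hTs]
  have hinner (z : Ed d) :
      ∫⁻ y, (‖f (x + t • z) - f (x + t • y)‖₊ : ℝ≥0∞) ^ p / (‖z - y‖₊ : ℝ≥0∞) ^ s =
        T ^ s * (T ^ (-(d : ℝ)) * ∫⁻ y, (‖f (x + t • z) - f y‖₊ : ℝ≥0∞) ^ p /
          (‖x + t • z - y‖₊ : ℝ≥0∞) ^ s) := by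
    rw [lintegral_congr (hkernel z), lintegral_const_mul' _ _ hTs,
      hscale fun w => (‖f (x + t • z) - f w‖₊ : ℝ≥0∞) ^ p / (‖x + t • z - w‖₊ : ℝ≥0∞) ^ s]
  have hTd : T ^ (-(d : ℝ)) ≠ ⊤ := ENNReal.rpow_ne_top_of_ne_zero hT0 hT
  rw [gagliardo, lintegral_congr hinner, lintegral_const_mul' _ _ hTs,
    lintegral_const_mul' _ _ hTd,
    hscale fun w => ∫⁻ y, (‖f w - f y‖₊ : ℝ≥0∞) ^ p / (‖w - y‖₊ : ℝ≥0∞) ^ s,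
    ← mul_assoc, ← mul_assoc, ← ENNReal.rpow_add _ _ hT0 hT, ← ENNReal.rpow_add _ _ hT0 hT,
    ENNReal.mul_rpow_of_nonneg _ _ (by positivity), ← ENNReal.rpow_mul, gagliardo]
  congr 2
  rw [hs]
  field_simp
  ring

end Rescaling

section KernelBounds

variable {α : Type*} [MeasurableSpace α] {μ : Measure α} {s : Set α} {k f : α → ℝ}

theorem enorm_integral_mul_le_setLIntegral_enorm (hs : MeasurableSet s)
    (hk : ∀ y, ‖k y‖ₑ ≤ s.indicator 1 y) (f : α → ℝ) :
    ‖∫ y, k y * f y ∂μ‖ₑ ≤ ∫⁻ y in s, ‖f y‖ₑ ∂μ := by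
  refine (enorm_integral_le_lintegral_enorm _).trans ?_
  rw [← lintegral_indicator hs]
  refine lintegral_mono fun y => ?_
  calc ‖k y * f y‖ₑ ≤ s.indicator 1 y * ‖f y‖ₑ := by rw [enorm_mul]; gcongr; exact hk y
    _ = s.indicator (fun y => ‖f y‖ₑ) y := by by_cases hy : y ∈ s <;> simp [hy]

theorem enorm_integral_mul_le_eLpNorm_restrict (hs : MeasurableSet s)
    (hk : ∀ y, ‖k y‖ₑ ≤ s.indicator 1 y) (hf : AEStronglyMeasurable f μ)
    {q : ℝ≥0∞} (hq : 1 ≤ q) :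
    ‖∫ y, k y * f y ∂μ‖ₑ ≤ eLpNorm f q (μ.restrict s) * μ s ^ (1 - 1 / q.toReal) := by
  refine (enorm_integral_mul_le_setLIntegral_enorm hs hk f).trans ?_
  rw [← eLpNorm_one_eq_lintegral_enorm]
  simpa using eLpNorm_le_eLpNorm_mul_rpow_measure_univ hq hf.restrict

theorem enorm_integral_mul_rpow_le_of_integral_eq_zero (hs : MeasurableSet s)
    (hk : ∀ y, ‖k y‖ₑ ≤ s.indicator 1 y) (hk_int : Integrable k μ) (hk0 : ∫ y, k y ∂μ = 0)
    (hf : AEStronglyMeasurable f μ) (hkf : Integrable (fun y => k y * f y) μ)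
    {p : ℝ} (hp : 1 ≤ p) (c : ℝ) :
    ‖∫ y, k y * f y ∂μ‖ₑ ^ p ≤ μ s ^ (p - 1) * ∫⁻ y in s, ‖f y - c‖ₑ ^ p ∂μ := by
  have hp0 : 0 < p := one_pos.trans_le hp
  have hcancel : ∫ y, k y * f y ∂μ = ∫ y, k y * (f y - c) ∂μ := by
    simp only [mul_sub]
    rw [integral_sub hkf (hk_int.mul_const c), integral_mul_const, hk0, zero_mul, sub_zero]
  have hHolder := enorm_integral_mul_le_eLpNorm_restrict hs hk
    (hf.sub aestronglyMeasurable_const : AEStronglyMeasurable (fun y => f y - c) μ)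
    (ENNReal.one_le_ofReal.2 hp)
  rw [eLpNorm_eq_lintegral_rpow_enorm_toReal (by simpa using hp0) ENNReal.ofReal_ne_top,
    ENNReal.toReal_ofReal hp0.le] at hHolder
  calc ‖∫ y, k y * f y ∂μ‖ₑ ^ p
      ≤ ((∫⁻ y in s, ‖f y - c‖ₑ ^ p ∂μ) ^ (1 / p) * μ s ^ (1 - 1 / p)) ^ p := by
        rw [hcancel]; gcongr; exact hHolder
    _ = μ s ^ (p - 1) * ∫⁻ y in s, ‖f y - c‖ₑ ^ p ∂μ := by
        rw [ENNReal.mul_rpow_of_nonneg _ _ hp0.le, ← ENNReal.rpow_mul, ← ENNReal.rpow_mul,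
          one_div_mul_cancel hp0.ne', ENNReal.rpow_one, mul_comm, sub_mul, one_mul,
          one_div_mul_cancel hp0.ne']

end KernelBounds

section Morrey

variable {d : ℕ} {r p : ℝ} {s : Set (Ed d)}

theorem setLIntegral_setLIntegral_enorm_sub_rpow_le_gagliardo {F : Type*} [NormedAddCommGroup F]
    (hp : 0 < p) (hrp : 0 ≤ r * p + d) (hs : MeasurableSet s) (hsd : Metric.ediam s ≠ ⊤)
    (f : Ed d → F) :
    ∫⁻ z in s, ∫⁻ y in s, ‖f y - f z‖ₑ ^ p ≤
      Metric.ediam s ^ (r * p + d) * gagliardo d r p f ^ p := by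
  set δ := Metric.ediam s
  have hδ : δ ^ (r * p + d) ≠ ⊤ := ENNReal.rpow_ne_top_of_nonneg hrp hsd
  have hpoint : ∀ z ∈ s, ∀ y ∈ s, ‖f y - f z‖ₑ ^ p ≤
      δ ^ (r * p + d) * (‖f z - f y‖ₑ ^ p / ‖z - y‖ₑ ^ (r * p + d)) := by
    intro z hz y hy
    rcases eq_or_ne z y with rfl | hzy
    · simp [hp]
    have hle : ‖z - y‖ₑ ≤ δ := by
      rw [← edist_eq_enorm_sub]; exact Metric.edist_le_ediam_of_mem hz hy
    have hne : ‖z - y‖ₑ ^ (r * p + d) ≠ 0 := by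
      simp [ENNReal.rpow_eq_zero_iff, sub_ne_zero.2 hzy]
    calc ‖f y - f z‖ₑ ^ p
        = ‖z - y‖ₑ ^ (r * p + d) * (‖f z - f y‖ₑ ^ p / ‖z - y‖ₑ ^ (r * p + d)) := by
          rw [ENNReal.mul_div_cancel hne (ENNReal.rpow_ne_top_of_nonneg hrp enorm_ne_top),
            enorm_sub_rev]
      _ ≤ _ := by gcongr
  calc ∫⁻ z in s, ∫⁻ y in s, ‖f y - f z‖ₑ ^ p
      ≤ ∫⁻ z in s, ∫⁻ y in s,
          δ ^ (r * p + d) * (‖f z - f y‖ₑ ^ p / ‖z - y‖ₑ ^ (r * p + d)) :=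
        setLIntegral_mono' hs fun z hz => setLIntegral_mono' hs (hpoint z hz)
    _ ≤ ∫⁻ z, ∫⁻ y, δ ^ (r * p + d) * (‖f z - f y‖ₑ ^ p / ‖z - y‖ₑ ^ (r * p + d)) :=
        (setLIntegral_le_lintegral _ _).trans
          (lintegral_mono fun z => setLIntegral_le_lintegral _ _)
    _ = δ ^ (r * p + d) * gagliardo d r p f ^ p := by
        simp only [lintegral_const_mul' _ _ hδ]
        rw [gagliardo, ← ENNReal.rpow_mul, one_div_mul_cancel hp.ne', ENNReal.rpow_one]
        rfl

theorem enorm_integral_mul_le_gagliardo (hp : 1 ≤ p) (hrp : 0 ≤ r * p + d)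
    (hs : MeasurableSet s) (hs0 : volume s ≠ 0) (hst : volume s ≠ ⊤) (hsd : Metric.ediam s ≠ ⊤)
    {k f : Ed d → ℝ} (hk : ∀ y, ‖k y‖ₑ ≤ s.indicator 1 y) (hk_int : Integrable k)
    (hk0 : ∫ y, k y = 0) (hf : AEStronglyMeasurable f) (hkf : Integrable fun y => k y * f y) :
    ‖∫ y, k y * f y‖ₑ ≤
      (volume s ^ (p - 2) * Metric.ediam s ^ (r * p + d)) ^ (1 / p) * gagliardo d r p f := by
  have hp0 : 0 < p := one_pos.trans_le hp
  set I := ‖∫ y, k y * f y‖ₑ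
  set δ := Metric.ediam s
  set G := gagliardo d r p f
  have haverage : volume s * I ^ p ≤
      volume s * (volume s ^ (p - 2) * δ ^ (r * p + d) * G ^ p) := by
    calc volume s * I ^ p = ∫⁻ _ in s, I ^ p := by rw [setLIntegral_const, mul_comm]
      _ ≤ ∫⁻ z in s, volume s ^ (p - 1) * ∫⁻ y in s, ‖f y - f z‖ₑ ^ p :=
          lintegral_mono fun z =>
            enorm_integral_mul_rpow_le_of_integral_eq_zero hs hk hk_int hk0 hf hkf hp (f z)
      _ = volume s ^ (p - 1) * ∫⁻ z in s, ∫⁻ y in s, ‖f y - f z‖ₑ ^ p :=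
          lintegral_const_mul' _ _ (ENNReal.rpow_ne_top_of_nonneg (by linarith) hst)
      _ ≤ volume s ^ (p - 1) * (δ ^ (r * p + d) * G ^ p) := by
          gcongr
          exact setLIntegral_setLIntegral_enorm_sub_rpow_le_gagliardo hp0 hrp hs hsd f
      _ = volume s * (volume s ^ (p - 2) * δ ^ (r * p + d) * G ^ p) := by
          rw [show p - 1 = 1 + (p - 2) by ring, ENNReal.rpow_add _ _ hs0 hst, ENNReal.rpow_one]
          ring
  have hroot := ENNReal.rpow_le_rpow ((ENNReal.mul_le_mul_iff_right hs0 hst).1 haverage)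
    (one_div_nonneg.2 hp0.le)
  rwa [ENNReal.mul_rpow_of_nonneg _ _ (one_div_nonneg.2 hp0.le), ← ENNReal.rpow_mul,
    ← ENNReal.rpow_mul, mul_one_div_cancel hp0.ne', ENNReal.rpow_one, ENNReal.rpow_one] at hroot

end Morrey

section Calculus

theorem enorm_sub_le_of_enorm_deriv_le_rpow {F : Type*} [NormedAddCommGroup F] [NormedSpace ℝ F]
    [CompleteSpace F] {A A' : ℝ → F} (hA : ∀ t, HasDerivAt A (A' t) t) (hA' : Continuous A')
    {s : ℝ} (hs : -1 < s) {M : ℝ≥0∞}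
    (hbound : ∀ t, 0 < t → ‖A' t‖ₑ ≤ ENNReal.ofReal t ^ s * M) {R : ℝ} (hR : 0 < R) :
    ‖A R - A 0‖ₑ ≤ ENNReal.ofReal (s + 1)⁻¹ * ENNReal.ofReal R ^ (s + 1) * M := by
  have hint := (intervalIntegral.intervalIntegrable_rpow' (a := 0) (b := R) hs).1
  have hmain : ∫⁻ t in Set.Ioc 0 R, ENNReal.ofReal t ^ s =
      ENNReal.ofReal (s + 1)⁻¹ * ENNReal.ofReal R ^ (s + 1) := by
    calc ∫⁻ t in Set.Ioc 0 R, ENNReal.ofReal t ^ s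
        = ∫⁻ t in Set.Ioc 0 R, ENNReal.ofReal (t ^ s) :=
          setLIntegral_congr_fun measurableSet_Ioc fun t ht => ENNReal.ofReal_rpow_of_pos ht.1
      _ = ENNReal.ofReal (∫ t in Set.Ioc 0 R, t ^ s) :=
          (ofReal_integral_eq_lintegral_ofReal hint <|
            ae_restrict_of_forall_mem measurableSet_Ioc fun t ht =>
              Real.rpow_nonneg ht.1.le s).symm
      _ = ENNReal.ofReal (s + 1)⁻¹ * ENNReal.ofReal R ^ (s + 1) := by
          rw [← intervalIntegral.integral_of_le hR.le, integral_rpow (Or.inl hs),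
            Real.zero_rpow (by linarith), sub_zero, ENNReal.ofReal_rpow_of_pos hR,
            ← ENNReal.ofReal_mul (inv_nonneg.2 (by linarith)), div_eq_inv_mul]
  rw [← intervalIntegral.integral_eq_sub_of_hasDerivAt (fun t _ => hA t)
    (hA'.intervalIntegrable 0 R), intervalIntegral.integral_of_le hR.le, ← hmain]
  calc ‖∫ t in Set.Ioc 0 R, A' t‖ₑ ≤ ∫⁻ t in Set.Ioc 0 R, ‖A' t‖ₑ :=
        enorm_integral_le_lintegral_enorm _
    _ ≤ ∫⁻ t in Set.Ioc 0 R, ENNReal.ofReal t ^ s * M :=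
        setLIntegral_mono' measurableSet_Ioc fun t ht => hbound t ht.1
    _ = (∫⁻ t in Set.Ioc 0 R, ENNReal.ofReal t ^ s) * M :=
        lintegral_mul_const _ (by fun_prop)

theorem exists_scale_balance {a b : ℝ} (ha : 0 < a) (hb : 0 < b) {N W : ℝ≥0∞}
    (hN0 : N ≠ 0) (hN : N ≠ ⊤) (hW0 : W ≠ 0) (hW : W ≠ ⊤) :
    ∃ R : ℝ, 0 < R ∧
      ENNReal.ofReal R ^ (-b) * N = N ^ (a / (a + b)) * W ^ (b / (a + b)) ∧
      ENNReal.ofReal R ^ a * W = N ^ (a / (a + b)) * W ^ (b / (a + b)) := by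
  have : 0 < a + b := by positivity
  set σ := 1 / (a + b) with hσ
  set T := N ^ σ * W ^ (-σ) with hT
  have hNσ : N ^ σ ≠ ⊤ := ENNReal.rpow_ne_top_of_ne_zero hN0 hN
  have hWσ : W ^ (-σ) ≠ ⊤ := ENNReal.rpow_ne_top_of_ne_zero hW0 hW
  have hT0 : T ≠ 0 :=
    mul_ne_zero (ENNReal.rpow_pos hN0.bot_lt hN).ne' (ENNReal.rpow_pos hW0.bot_lt hW).ne'
  have hTt : T ≠ ⊤ := ENNReal.mul_ne_top hNσ hWσ
  have hTpow (e : ℝ) : T ^ e = N ^ (σ * e) * W ^ (-σ * e) := by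
    rw [hT, ENNReal.mul_rpow_of_ne_top hNσ hWσ, ← ENNReal.rpow_mul, ← ENNReal.rpow_mul]
  refine ⟨T.toReal, ENNReal.toReal_pos hT0 hTt, ?_, ?_⟩ <;> rw [ENNReal.ofReal_toReal hTt, hTpow]
  · rw [mul_right_comm]
    nth_rw 2 [← ENNReal.rpow_one N]
    rw [← ENNReal.rpow_add _ _ hN0 hN]
    congr 2 <;> rw [hσ] <;> field_simp
    ring
  · rw [mul_assoc]
    nth_rw 2 [← ENNReal.rpow_one W]
    rw [← ENNReal.rpow_add _ _ hW0 hW]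
    congr 2 <;> rw [hσ] <;> field_simp
    ring

theorem le_two_mul_rpow_mul_rpow_of_forall_scale {a b : ℝ} (ha : 0 < a) (hb : 0 < b)
    {X K N W : ℝ≥0∞} (hK0 : K ≠ 0) (hK : K ≠ ⊤) (hN0 : N ≠ 0) (hN : N ≠ ⊤)
    (h : ∀ R : ℝ, 0 < R → X ≤ K * (ENNReal.ofReal R ^ (-b) * N + ENNReal.ofReal R ^ a * W)) :
    X ≤ 2 * K * N ^ (a / (a + b)) * W ^ (b / (a + b)) := by
  rcases eq_or_ne W ⊤ with rfl | hW
  · have hNpos : N ^ (a / (a + b)) ≠ 0 := (ENNReal.rpow_pos hN0.bot_lt hN).ne'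
    rw [ENNReal.top_rpow_of_pos (by positivity),
      ENNReal.mul_top (mul_ne_zero (mul_ne_zero two_ne_zero hK0) hNpos)]
    exact le_top
  rcases eq_or_ne W 0 with rfl | hW0
  · have hdecay : Filter.Tendsto (fun R : ℝ => K * N * ENNReal.ofReal (R ^ (-b))) Filter.atTop
        (nhds 0) := by
      simpa using ENNReal.Tendsto.const_mul
        (ENNReal.tendsto_ofReal (tendsto_rpow_neg_atTop hb)) (.inr (ENNReal.mul_ne_top hK hN))
    refine (ge_of_tendsto hdecay ?_).trans zero_le
    filter_upwards [Filter.eventually_gt_atTop 0] with R hR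
    have hXR := h R hR
    rwa [mul_zero, add_zero, ENNReal.ofReal_rpow_of_pos hR, mul_comm (ENNReal.ofReal _),
      ← mul_assoc] at hXR
  obtain ⟨R, hR, hlow, hhigh⟩ := exists_scale_balance ha hb hN0 hN hW0 hW
  calc X ≤ K * (ENNReal.ofReal R ^ (-b) * N + ENNReal.ofReal R ^ a * W) := h R hR
    _ = 2 * K * N ^ (a / (a + b)) * W ^ (b / (a + b)) := by rw [hlow, hhigh]; ring

end Calculus

section Bump

variable {E : Type*} [NormedAddCommGroup E]

/-- The truncated paraboloid `(1 - ‖y‖²)₊`, the averaging kernel of the proof. It is chosen because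
`bump y • y` is the gradient of `-bump² / 4`. -/
noncomputable def bump (y : E) : ℝ := max 0 (1 - ‖y‖ ^ 2)

theorem continuous_bump : Continuous (bump : E → ℝ) := by unfold bump; fun_prop

theorem bump_nonneg (y : E) : 0 ≤ bump y := le_max_left _ _

theorem bump_le_one (y : E) : bump y ≤ 1 :=
  max_le zero_le_one (by nlinarith [sq_nonneg ‖y‖])

theorem bump_neg (y : E) : bump (-y) = bump y := by simp only [bump, norm_neg]

theorem bump_eq_zero {y : E} (hy : y ∉ Metric.closedBall (0 : E) 1) : bump y = 0 := by
  rw [mem_closedBall_zero_iff, not_le] at hy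
  exact max_eq_left (by nlinarith)

theorem enorm_bump_mul_le_indicator {g : E → ℝ} (hg : ∀ y, |g y| ≤ max 1 ‖y‖) (y : E) :
    ‖bump y * g y‖ₑ ≤ (Metric.closedBall (0 : E) 1).indicator 1 y := by
  by_cases hy : y ∈ Metric.closedBall (0 : E) 1
  · have hgy : |g y| ≤ 1 := (hg y).trans (max_le le_rfl (mem_closedBall_zero_iff.1 hy))
    rw [Set.indicator_of_mem hy, Pi.one_apply, ← ofReal_norm, ENNReal.ofReal_le_one, norm_mul,
      Real.norm_of_nonneg (bump_nonneg y)]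
    exact mul_le_one₀ (bump_le_one y) (norm_nonneg _) hgy
  · simp [bump_eq_zero hy]

theorem hasCompactSupport_bump [NormedSpace ℝ E] [FiniteDimensional ℝ E] :
    HasCompactSupport (bump : E → ℝ) :=
  .intro (isCompact_closedBall 0 1) fun _ => bump_eq_zero

theorem hasDerivAt_max_zero_sq (s : ℝ) :
    HasDerivAt (fun s : ℝ => max 0 s ^ 2) (2 * max 0 s) s := by
  rcases lt_trichotomy s 0 with hs | rfl | hs
  · have hzero : (fun s : ℝ => max 0 s ^ 2) =ᶠ[nhds s] fun _ => 0 := by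
      filter_upwards [gt_mem_nhds hs] with a ha
      simp [max_eq_left ha.le]
    simpa [max_eq_left hs.le] using (hasDerivAt_const s (0 : ℝ)).congr_of_eventuallyEq hzero
  · have hsq : (fun x : ℝ => max 0 x ^ 2) =O[nhds 0] fun x => x ^ 2 :=
      .of_bound' (.of_forall fun x => by
        rw [norm_pow, norm_pow]
        gcongr
        simpa using abs_max_le_max_abs_abs (a := 0) (b := x))
    rw [hasDerivAt_iff_isLittleO]
    simpa using hsq.trans_isLittleO (Asymptotics.isLittleO_pow_id one_lt_two)
  · have hpow : (fun s : ℝ => max 0 s ^ 2) =ᶠ[nhds s] fun s => s ^ 2 := by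
      filter_upwards [lt_mem_nhds hs] with a ha
      simp [max_eq_right ha.le]
    simpa [max_eq_right hs.le] using (hasDerivAt_pow 2 s).congr_of_eventuallyEq hpow

variable [InnerProductSpace ℝ E]

theorem hasFDerivAt_bump_sq (y : E) :
    HasFDerivAt (fun y : E => bump y ^ 2) (-(4 * bump y) • innerSL ℝ y) y := by
  have hparaboloid : HasFDerivAt (fun y : E => 1 - ‖y‖ ^ 2) (-(2 • innerSL ℝ y)) y :=
    (hasStrictFDerivAt_norm_sq y).hasFDerivAt.const_sub 1
  convert! (hasDerivAt_max_zero_sq (1 - ‖y‖ ^ 2)).comp_hasFDerivAt y hparaboloid using 1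
  ext w
  simp only [bump, smul_apply, neg_apply, innerSL_apply_apply, smul_eq_mul, nsmul_eq_mul]
  push_cast
  ring

variable [FiniteDimensional ℝ E] [MeasurableSpace E] [BorelSpace E]

theorem integrable_bump_mul {f : E → ℝ} (hf : Continuous f) :
    Integrable (fun y : E => bump y * f y) :=
  (continuous_bump.mul hf).integrable_of_hasCompactSupport hasCompactSupport_bump.mul_right

theorem integral_bump_pos : 0 < ∫ y : E, bump y :=
  continuous_bump.integral_pos_of_hasCompactSupport_nonneg_nonzero hasCompactSupport_bump
    bump_nonneg (x := 0) (by simp [bump])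

theorem integral_bump_mul_eq_zero_of_odd {g : E → ℝ} (hg : ∀ y, g (-y) = -g y) :
    ∫ y : E, bump y * g y = 0 := by
  have hneg := integral_neg_eq_self (fun y : E => bump y * g y) volume
  simp only [bump_neg, hg, mul_neg, integral_neg] at hneg
  linarith

theorem four_mul_integral_bump_mul_inner_mul {f : E → ℝ} (hf : ContDiff ℝ 1 f) (w : E) :
    4 * ∫ y, bump y * (⟪y, w⟫ * f y) = ∫ y, bump y ^ 2 * fderiv ℝ f y w := by
  have hfc := hf.continuous
  have hfd : Continuous fun y => fderiv ℝ f y w := by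
    have := hf.continuous_fderiv one_ne_zero
    fun_prop
  have hderiv (y : E) : fderiv ℝ (fun y : E => bump y ^ 2) y w * f y =
      -4 * (bump y * (⟪y, w⟫ * f y)) := by
    rw [(hasFDerivAt_bump_sq y).fderiv]
    simp only [smul_apply, innerSL_apply_apply, smul_eq_mul]
    ring
  have hparts := integral_mul_fderiv_eq_neg_fderiv_mul_of_integrable (μ := volume) (v := w)
    (f := fun y : E => bump y ^ 2) (g := f)
    (by simpa only [hderiv] using (integrable_bump_mul (by fun_prop)).const_mul (-4))
    (by simpa only [sq, mul_assoc] using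
      integrable_bump_mul (f := fun y => bump y * fderiv ℝ f y w) (continuous_bump.mul hfd))
    (by simpa only [sq, mul_assoc] using
      integrable_bump_mul (f := fun y => bump y * f y) (continuous_bump.mul hfc))
    (fun y _ => (hasFDerivAt_bump_sq y).differentiableAt)
    (fun y _ => hf.differentiable one_ne_zero y)
  rw [hparts]
  simp only [hderiv, integral_const_mul]
  ring

end Bump

section BumpAverage

variable {E : Type*} [NormedAddCommGroup E] [InnerProductSpace ℝ E] [FiniteDimensional ℝ E]
  [MeasurableSpace E] [BorelSpace E] {f : E → ℝ}

/-- The average `∫ bump y * f (x + t • y) dy` of `f` at scale `t` around `x`, not divided by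
`∫ bump`. It interpolates between a multiple of `f x` (at `t = 0`) and a quantity controlled by
`Lᵖ` norms. -/
noncomputable def bumpAverage (f : E → ℝ) (x : E) (t : ℝ) : ℝ :=
  ∫ y, bump y * f (x + t • y)

theorem bumpAverage_zero (f : E → ℝ) (x : E) : bumpAverage f x 0 = (∫ y : E, bump y) * f x := by
  simp only [bumpAverage, zero_smul, add_zero, integral_mul_const]

theorem integral_bump_mul_enorm_le (f : E → ℝ) (x : E) (t : ℝ) :
    ENNReal.ofReal (∫ y : E, bump y) * ‖f x‖ₑ ≤
      ‖bumpAverage f x t‖ₑ + ‖bumpAverage f x t - bumpAverage f x 0‖ₑ := by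
  rw [← Real.enorm_of_nonneg (integral_nonneg bump_nonneg), ← enorm_mul, ← bumpAverage_zero]
  simpa using enorm_sub_le (a := bumpAverage f x t) (b := bumpAverage f x t - bumpAverage f x 0)

theorem continuous_integral_bump_mul {g : ℝ → E → ℝ} (hg : Continuous g.uncurry) :
    Continuous fun t => ∫ y, bump y * g t y := by
  rw [← continuousOn_univ]
  refine continuousOn_integral_of_compact_support (isCompact_closedBall (0 : E) 1) ?_ ?_
  · exact ((continuous_bump.comp continuous_snd).mul hg).continuousOn
  · intro t y _ hy
    rw [bump_eq_zero hy, zero_mul]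

theorem hasDerivAt_bumpAverage (hf : ContDiff ℝ 1 f) (x : E) (t : ℝ) :
    HasDerivAt (bumpAverage f x) (∫ y, bump y * fderiv ℝ f (x + t • y) y) t := by
  have hfc := hf.continuous
  have := hf.continuous_fderiv one_ne_zero
  have hcompact := (isCompact_closedBall t 1).prod (isCompact_closedBall (0 : E) 1)
  obtain ⟨M, hM⟩ := hcompact.exists_bound_of_continuousOn
    (f := fun q : ℝ × E => fderiv ℝ f (x + q.1 • q.2) q.2)
    (Continuous.continuousOn (by fun_prop))
  refine (hasDerivAt_integral_of_dominated_loc_of_deriv_le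
    (F := fun t y => bump y * f (x + t • y)) (bound := fun y => bump y * M)
    (Metric.closedBall_mem_nhds t one_pos)
    (.of_forall fun s => (integrable_bump_mul (by fun_prop)).aestronglyMeasurable)
    (integrable_bump_mul (by fun_prop))
    (F' := fun t y => bump y * fderiv ℝ f (x + t • y) y)
    (integrable_bump_mul (by fun_prop)).aestronglyMeasurable
    (.of_forall fun y s hs => ?_) (integrable_bump_mul continuous_const)
    (.of_forall fun y s _ => ?_)).2
  · by_cases hy : y ∈ Metric.closedBall (0 : E) 1
    · rw [norm_mul, Real.norm_of_nonneg (bump_nonneg y)]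
      exact mul_le_mul_of_nonneg_left (hM (s, y) ⟨hs, hy⟩) (bump_nonneg y)
    · simp [bump_eq_zero hy]
  · have hline : HasDerivAt (fun s : ℝ => x + s • y) y s := by
      simpa using ((hasDerivAt_id s).smul_const y).const_add x
    exact ((hf.differentiable one_ne_zero _).hasFDerivAt.comp_hasDerivAt s hline).const_mul _

theorem enorm_bumpAverage_le (hf : Continuous f) {q : ℝ≥0∞} (hq1 : 1 ≤ q) (hq : q ≠ ⊤) (x : E)
    {t : ℝ} (ht : 0 < t) :
    ‖bumpAverage f x t‖ₑ ≤ volume (Metric.closedBall (0 : E) 1) ^ (1 - 1 / q.toReal) *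
      (ENNReal.ofReal t ^ (-(Module.finrank ℝ E / q.toReal)) * eLpNorm f q) := by
  have hft : Continuous fun y : E => f (x + t • y) := by fun_prop
  have hker := enorm_integral_mul_le_eLpNorm_restrict (μ := volume) (k := bump)
    Metric.isClosed_closedBall.measurableSet
    (by simpa using enorm_bump_mul_le_indicator (E := E) (g := 1) (by simp))
    hft.aestronglyMeasurable hq1
  calc ‖bumpAverage f x t‖ₑ
      ≤ eLpNorm (fun y : E => f (x + t • y)) q * volume (Metric.closedBall (0 : E) 1) ^
          (1 - 1 / q.toReal) := hker.trans <| by gcongr; exact Measure.restrict_le_self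
    _ = _ := by
        rw [eLpNorm_comp_add_smul volume f x ht (one_pos.trans_le hq1).ne' hq, mul_comm]

end BumpAverage

theorem exists_enorm_integral_bump_mul_coord_mul_le_gagliardo {d : ℕ} {r p : ℝ} (hp : 1 ≤ p)
    (hrp : 0 ≤ r * p + d) :
    ∃ K : NNReal, ∀ f : Ed d → ℝ, Continuous f → ∀ (m : Fin d) (x : Ed d) (t : ℝ), 0 < t →
      ‖∫ y, bump y * (y m * f (x + t • y))‖ₑ ≤
        ENNReal.ofReal t ^ (r - d / p) * (K * gagliardo d r p f) := by
  set B := Metric.closedBall (0 : Ed d) 1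
  have hB0 : volume B ≠ 0 := (Metric.measure_closedBall_pos volume _ one_pos).ne'
  have hBt : volume B ≠ ⊤ := measure_closedBall_lt_top.ne
  have hBd : Metric.ediam B ≠ ⊤ := Metric.isBounded_closedBall.ediam_ne_top
  have hK : (volume B ^ (p - 2) * Metric.ediam B ^ (r * p + d)) ^ (1 / p) ≠ ⊤ :=
    ENNReal.rpow_ne_top_of_nonneg (by positivity) <| ENNReal.mul_ne_top
      (ENNReal.rpow_ne_top_of_ne_zero hB0 hBt) (ENNReal.rpow_ne_top_of_nonneg hrp hBd)
  lift (volume B ^ (p - 2) * Metric.ediam B ^ (r * p + d)) ^ (1 / p) to NNReal using hK with K hKdef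
  refine ⟨K, fun f hf m x t ht => ?_⟩
  have hcoord (y : Ed d) : |y m| ≤ max 1 ‖y‖ := (PiLp.norm_apply_le y m).trans (le_max_right _ _)
  have hft : Continuous fun y : Ed d => f (x + t • y) := by fun_prop
  have hmorrey := enorm_integral_mul_le_gagliardo hp hrp
    Metric.isClosed_closedBall.measurableSet hB0 hBt hBd (enorm_bump_mul_le_indicator hcoord)
    (integrable_bump_mul (by fun_prop)) (integral_bump_mul_eq_zero_of_odd fun y => rfl)
    hft.aestronglyMeasurable
    (by simpa only [mul_assoc] using integrable_bump_mul (by fun_prop))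
  rw [← hKdef, gagliardo_comp_add_smul (one_pos.trans_le hp) f x ht] at hmorrey
  simpa only [mul_assoc, mul_left_comm] using hmorrey

section VectorFields

variable {d : ℕ} {v : Ed d → Ed d}

/-- The divergence `∑ i, ∂_i v^i` of a vector field. -/
noncomputable def divergence (v : Ed d → Ed d) (x : Ed d) : ℝ :=
  ∑ i, pd d i (fun y => v y i) x

/-- The vorticity component `ω^{mn} = ∂_m v^n - ∂_n v^m` of a vector field. -/
noncomputable def vorticity (v : Ed d → Ed d) (m n : Fin d) (x : Ed d) : ℝ :=
  pd d m (fun y => v y n) x - pd d n (fun y => v y m) x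

theorem sum_coord_smul_single (y : Ed d) : ∑ m, y m • EuclideanSpace.single m (1 : ℝ) = y := by
  simpa using (EuclideanSpace.basisFun (Fin d) ℝ).sum_repr y

theorem enorm_le_sum_enorm_coord (y : Ed d) : ‖y‖ₑ ≤ ∑ m, ‖y m‖ₑ := by
  conv_lhs => rw [← sum_coord_smul_single y]
  refine (enorm_sum_le _ _).trans_eq ?_
  simp only [← ofReal_norm, norm_smul, PiLp.norm_single, norm_one, mul_one]

theorem fderiv_coord_apply {x : Ed d} (hv : DifferentiableAt ℝ v x) (j : Fin d) (w : Ed d) :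
    fderiv ℝ (fun y => v y j) x w = fderiv ℝ v x w j := by
  have hproj : HasFDerivAt (fun y => v y j) (EuclideanSpace.proj j ∘L fderiv ℝ v x) x :=
    (EuclideanSpace.proj j : Ed d →L[ℝ] ℝ).hasFDerivAt.comp x hv.hasFDerivAt
  rw [hproj.fderiv]
  rfl

theorem pd_coord {x : Ed d} (hv : DifferentiableAt ℝ v x) (i j : Fin d) :
    pd d i (fun y => v y j) x = fderiv ℝ v x (EuclideanSpace.single i 1) j :=
  fderiv_coord_apply hv j _

theorem continuous_vorticity (hv : ContDiff ℝ 1 v) (m n : Fin d) :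
    Continuous (vorticity v m n) := by
  have := hv.continuous_fderiv one_ne_zero
  unfold vorticity
  simp only [pd_coord (hv.differentiable one_ne_zero _)]
  fun_prop

theorem divergence_comp_add_smul (V : Ed d → Ed d) (x : Ed d) (t : ℝ) (y : Ed d) :
    divergence (fun y => V (x + t • y)) y = t * divergence V (x + t • y) := by
  have hpd (f : Ed d → ℝ) (i : Fin d) :
      pd d i (fun y => f (x + t • y)) y = t * pd d i f (x + t • y) := by
    rw [pd, fderiv_comp_smul (f := fun z => f (x + z)), fderiv_comp_add_left]
    rfl
  rw [divergence, divergence, Finset.mul_sum]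
  exact Finset.sum_congr rfl fun i _ => hpd (fun z => V z i) i

theorem divergence_fderiv_apply (hv : ContDiff ℝ 2 v) (w x : Ed d) :
    divergence (fun y => fderiv ℝ v y w) x = fderiv ℝ (divergence v) x w := by
  have hdiff : Differentiable ℝ (fderiv ℝ v) :=
    (hv.fderiv_right (m := 1) (by norm_num)).differentiable one_ne_zero
  have hsymm := (hv.contDiffAt (x := x)).isSymmSndFDerivAt (by simp)
  have hsnd (u w : Ed d) (i : Fin d) : fderiv ℝ (fun y => fderiv ℝ v y u i) x w =
      fderiv ℝ (fderiv ℝ v) x w u i := by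
    rw [fderiv_coord_apply (by fun_prop), fderiv_clm_apply (hdiff x) (differentiableAt_const _)]
    simp
  have hdiv : divergence v = fun y => ∑ i, fderiv ℝ v y (EuclideanSpace.single i 1) i := by
    ext y
    simp only [divergence, pd_coord (hv.differentiable two_ne_zero y)]
  rw [hdiv, fderiv_fun_sum fun i _ => by fun_prop, sum_apply, divergence]
  exact Finset.sum_congr rfl fun i _ => by rw [pd, hsnd, hsnd, hsymm.eq]

theorem sum_coord_mul_vorticity {x : Ed d} (hv : DifferentiableAt ℝ v x) (y : Ed d) (n : Fin d) :
    ∑ m, y m * vorticity v m n x =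
      fderiv ℝ v x y n - ⟪y, fderiv ℝ v x (EuclideanSpace.single n 1)⟫ := by
  have hy : fderiv ℝ v x y = ∑ m, y m • fderiv ℝ v x (EuclideanSpace.single m 1) := by
    conv_lhs => rw [← sum_coord_smul_single y]
    simp only [map_sum, map_smul]
  rw [hy]
  simp [vorticity, pd_coord hv, mul_sub, PiLp.inner_apply, mul_comm]

theorem integral_bump_mul_inner_eq_zero_of_divergence_eq_zero {V : Ed d → Ed d}
    (hV : ContDiff ℝ 1 V) (hdiv : ∀ x, divergence V x = 0) : ∫ y, bump y * ⟪y, V y⟫ = 0 := by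
  have hVi (i : Fin d) : ContDiff ℝ 1 fun y => V y i := by fun_prop
  have hVd (i : Fin d) : Continuous (pd d i fun y => V y i) := by
    have := (hVi i).continuous_fderiv one_ne_zero
    unfold pd
    fun_prop
  have hsum : 4 * ∫ y, bump y * ⟪y, V y⟫ = ∫ y, bump y ^ 2 * divergence V y := by
    calc 4 * ∫ y, bump y * ⟪y, V y⟫
        = ∑ i, 4 * ∫ y, bump y * (⟪y, EuclideanSpace.single i 1⟫ * V y i) := by
          rw [← Finset.mul_sum, ← integral_finsetSum _ fun i _ =>
            integrable_bump_mul (by fun_prop)]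
          simp [PiLp.inner_apply, Finset.sum_mul, mul_comm]
      _ = ∑ i, ∫ y, bump y ^ 2 * pd d i (fun y => V y i) y :=
          Finset.sum_congr rfl fun i _ => four_mul_integral_bump_mul_inner_mul (hVi i) _
      _ = ∫ y, bump y ^ 2 * divergence V y := by
          rw [← integral_finsetSum _ fun i _ => by
            simpa only [sq, mul_assoc] using integrable_bump_mul
              (f := fun y => bump y * pd d i (fun y => V y i) y) (continuous_bump.mul (hVd i))]
          simp only [divergence, Finset.mul_sum]
  simpa [hdiv] using hsum

theorem hasDerivAt_bumpAverage_of_divergence_eq_zero (hv : ContDiff ℝ 2 v)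
    (hdiv : ∀ x, divergence v x = 0) (n : Fin d) (x : Ed d) (t : ℝ) :
    HasDerivAt (bumpAverage (fun y => v y n) x)
      (∑ m, ∫ y, bump y * (y m * vorticity v m n (x + t • y))) t := by
  have hv1 : ContDiff ℝ 1 v := hv.of_le one_le_two
  set V : Ed d → Ed d := fun z => fderiv ℝ v z (EuclideanSpace.single n 1)
  have hV : ContDiff ℝ 1 fun y => V (x + t • y) := by
    have : ContDiff ℝ 1 (fderiv ℝ v) := hv.fderiv_right (by norm_num)
    fun_prop
  have hVdiv (y : Ed d) : divergence (fun y => V (x + t • y)) y = 0 := by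
    rw [divergence_comp_add_smul, divergence_fderiv_apply hv, funext hdiv]
    simp
  have hω (m : Fin d) := continuous_vorticity hv1 m n
  have hsplit (y : Ed d) : fderiv ℝ (fun z => v z n) (x + t • y) y =
      ⟪y, V (x + t • y)⟫ + ∑ m, y m * vorticity v m n (x + t • y) := by
    have hvx := hv1.differentiable one_ne_zero (x + t • y)
    rw [sum_coord_mul_vorticity hvx, add_sub_cancel, fderiv_coord_apply hvx]
  convert! hasDerivAt_bumpAverage (f := fun y => v y n) (by fun_prop) x t using 1
  simp only [hsplit, mul_add, Finset.mul_sum]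
  rw [integral_add (integrable_bump_mul (by fun_prop))
      (integrable_finsetSum _ fun m _ => integrable_bump_mul (by fun_prop)),
    integral_bump_mul_inner_eq_zero_of_divergence_eq_zero hV hVdiv, zero_add,
    integral_finsetSum _ fun m _ => integrable_bump_mul (by fun_prop)]

end VectorFields

section Interpolation

variable {d : ℕ} {r p : ℝ}

theorem exists_enorm_bumpAverage_sub_le_gagliardo_vorticity (hr : 0 ≤ r) (hp : 1 ≤ p)
    (hh : -1 < r - d / p) :
    ∃ K : NNReal, ∀ v : Ed d → Ed d, ContDiff ℝ 2 v → (∀ x, divergence v x = 0) →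
      ∀ (j : Fin d) (x : Ed d) (R : ℝ), 0 < R →
        ‖bumpAverage (fun y => v y j) x R - bumpAverage (fun y => v y j) x 0‖ₑ ≤
          K * (ENNReal.ofReal R ^ (r - d / p + 1) *
            ⨆ m, ⨆ n, gagliardo d r p (vorticity v m n)) := by
  obtain ⟨K, hK⟩ := exists_enorm_integral_bump_mul_coord_mul_le_gagliardo (r := r) hp
    (by positivity : 0 ≤ r * p + d)
  refine ⟨(r - d / p + 1)⁻¹.toNNReal * (d * K), fun v hv hdiv j x R hR => ?_⟩
  set W := ⨆ m, ⨆ n, gagliardo d r p (vorticity v m n)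
  have hω (m : Fin d) := continuous_vorticity (hv.of_le one_le_two) m j
  have hbound (t : ℝ) (ht : 0 < t) :
      ‖∑ m, ∫ y, bump y * (y m * vorticity v m j (x + t • y))‖ₑ ≤
        ENNReal.ofReal t ^ (r - d / p) * (d * (K * W)) := by
    calc ‖∑ m, ∫ y, bump y * (y m * vorticity v m j (x + t • y))‖ₑ
        ≤ ∑ m, ‖∫ y, bump y * (y m * vorticity v m j (x + t • y))‖ₑ := enorm_sum_le _ _
      _ ≤ ∑ _m : Fin d, ENNReal.ofReal t ^ (r - d / p) * (K * W) := by
          refine Finset.sum_le_sum fun m _ => (hK _ (hω m) m x t ht).trans ?_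
          gcongr
          exact le_iSup₂_of_le m j le_rfl
      _ = ENNReal.ofReal t ^ (r - d / p) * (d * (K * W)) := by
          simp only [Finset.sum_const, Finset.card_univ, Fintype.card_fin, nsmul_eq_mul]
          ring
  refine (enorm_sub_le_of_enorm_deriv_le_rpow
    (hasDerivAt_bumpAverage_of_divergence_eq_zero hv hdiv j x)
    (continuous_finsetSum _ fun m _ => continuous_integral_bump_mul (by fun_prop))
    hh hbound hR).trans_eq ?_
  push_cast
  rw [ENNReal.ofReal]
  ring

theorem exists_enorm_le_eLpNorm_add_gagliardo_vorticity {q : ℝ≥0∞} (hr : 0 ≤ r) (hp : 1 ≤ p)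
    (hh : -1 < r - d / p) (hq1 : 1 ≤ q) (hq : q ≠ ⊤) :
    ∃ K : NNReal, 0 < K ∧ ∀ v : Ed d → Ed d, ContDiff ℝ 2 v → (∀ x, divergence v x = 0) →
      ∀ (x : Ed d) (R : ℝ), 0 < R →
        ‖v x‖ₑ ≤ K * (ENNReal.ofReal R ^ (-(d / q.toReal)) * eLpNorm v q +
          ENNReal.ofReal R ^ (r - d / p + 1) *
            ⨆ m, ⨆ n, gagliardo d r p (vorticity v m n)) := by
  obtain ⟨K, hK⟩ := exists_enorm_bumpAverage_sub_le_gagliardo_vorticity hr hp hh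
  have hBt : volume (Metric.closedBall (0 : Ed d) 1) ^ (1 - 1 / q.toReal) ≠ ⊤ :=
    ENNReal.rpow_ne_top_of_ne_zero (Metric.measure_closedBall_pos volume _ one_pos).ne'
      measure_closedBall_lt_top.ne
  lift volume (Metric.closedBall (0 : Ed d) 1) ^ (1 - 1 / q.toReal) to NNReal using hBt with B hB
  set c := (∫ y : Ed d, bump y).toNNReal
  have hc : c ≠ 0 := (Real.toNNReal_pos.2 integral_bump_pos).ne'
  refine ⟨c⁻¹ * (d * (B + K)) + 1, by positivity, fun v hv hdiv x R hR => ?_⟩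
  set L := ENNReal.ofReal R ^ (-(d / q.toReal)) * eLpNorm v q
  set H := ENNReal.ofReal R ^ (r - d / p + 1) * ⨆ m, ⨆ n, gagliardo d r p (vorticity v m n)
  have hcoord (n : Fin d) : c * ‖v x n‖ₑ ≤ B * L + K * H := by
    have havg := enorm_bumpAverage_le (f := fun y => v y n) (by fun_prop) hq1 hq x hR
    rw [finrank_euclideanSpace_fin, ← hB] at havg
    have hvn : eLpNorm (fun y => v y n) q ≤ eLpNorm v q :=
      eLpNorm_mono fun y => PiLp.norm_apply_le (v y) n
    refine (integral_bump_mul_enorm_le (fun y => v y n) x R).trans ?_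
    exact add_le_add (havg.trans (mul_le_mul' le_rfl (mul_le_mul' le_rfl hvn)))
      (hK v hv hdiv n x R hR)
  calc ‖v x‖ₑ ≤ ∑ n, ‖v x n‖ₑ := enorm_le_sum_enorm_coord (v x)
    _ = (c : ℝ≥0∞)⁻¹ * ∑ n, c * ‖v x n‖ₑ := by
        rw [← Finset.mul_sum, ← mul_assoc,
          ENNReal.inv_mul_cancel (ENNReal.coe_ne_zero.2 hc) ENNReal.coe_ne_top, one_mul]
    _ ≤ (c : ℝ≥0∞)⁻¹ * ∑ _n : Fin d, (B + K) * (L + H) := by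
        gcongr (c : ℝ≥0∞)⁻¹ * ∑ n, ?_ with n
        refine (hcoord n).trans ?_
        rw [mul_add]
        gcongr <;> simp
    _ = (c⁻¹ * (d * (B + K)) : NNReal) * (L + H) := by
        push_cast [ENNReal.coe_inv hc]
        simp [mul_assoc]
    _ ≤ (c⁻¹ * (d * (B + K)) + 1 : NNReal) * (L + H) := by
        gcongr
        simp

theorem stmt13_general [NeZero d] {q : ℝ≥0∞} (hr : 0 ≤ r) (hp : 1 ≤ p) (hh : -1 < r - d / p)
    (hq1 : 1 ≤ q) (hq : q ≠ ⊤) :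
    ∃ C : ℝ, 0 < C ∧ ∀ v : Ed d → Ed d, ContDiff ℝ 2 v → MemLp v q →
      (∀ x, divergence v x = 0) →
      (⨆ x, (‖v x‖₊ : ℝ≥0∞)) ≤
        ENNReal.ofReal C *
          eLpNorm v q volume ^ ((r - d / p + 1) / (r - d / p + 1 + d / q.toReal)) *
          (⨆ m, ⨆ n, gagliardo d r p (vorticity v m n)) ^
            ((d / q.toReal) / (r - d / p + 1 + d / q.toReal)) := by
  obtain ⟨K, hK0, hK⟩ := exists_enorm_le_eLpNorm_add_gagliardo_vorticity hr hp hh hq1 hq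
  refine ⟨2 * K, by positivity, fun v hv hvq hdiv => ?_⟩
  rcases eq_or_ne (eLpNorm v q) 0 with hN0 | hN0
  · have hv0 : v = 0 := (hv.continuous.ae_eq_iff_eq volume continuous_const).1 <|
      (eLpNorm_eq_zero_iff hv.continuous.aestronglyMeasurable (one_pos.trans_le hq1).ne').1 hN0
    simp [hv0]
  have hd : 0 < (d : ℝ) := Nat.cast_pos.2 (NeZero.pos d)
  have hqpos : 0 < q.toReal := ENNReal.toReal_pos (one_pos.trans_le hq1).ne' hq
  rw [ENNReal.ofReal_mul two_pos.le, ENNReal.ofReal_ofNat, ENNReal.ofReal_coe_nnreal]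
  exact le_two_mul_rpow_mul_rpow_of_forall_scale (by linarith) (by positivity)
    (ENNReal.coe_ne_zero.2 hK0.ne') ENNReal.coe_ne_top hN0 hvq.eLpNorm_ne_top
    fun R hR => iSup_le fun x => hK v hv hdiv x R hR

end Interpolation

/-- For a divergence-free Schwartz vector field `v` on `ℝ³`, `0 < r < 1`,
`2 ≤ p < ∞`, `h = r − 3/p > 0`:
`‖v‖_∞ ≤ C ‖v‖₂^{(h+1)/(h+5/2)} (max [ω^{mn}]_{r,p})^{(3/2)/(h+5/2)}`. -/
theorem stmt13 (r p : ℝ) (hr0 : 0 < r) (hr1 : r < 1) (hp2 : 2 ≤ p)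
    (hh : 0 < r - 3 / p) :
    ∃ C : ℝ, 0 < C ∧ ∀ v : SchwartzMap (Ed 3) (Ed 3),
      (∀ x, ∑ i : Fin 3, pd 3 i (fun y => v y i) x = 0) →
      (⨆ x, (‖v x‖₊ : ℝ≥0∞))
        ≤ ENNReal.ofReal C *
            eLpNorm (⇑v) 2 volume ^ ((r - 3 / p + 1) / (r - 3 / p + 5 / 2)) *
            (⨆ m : Fin 3, ⨆ n : Fin 3, gagliardo 3 r p
                (fun x => pd 3 m (fun y => v y n) x - pd 3 n (fun y => v y m) x))
              ^ ((3 / 2) / (r - 3 / p + 5 / 2)) := by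
  obtain ⟨C, hC, hbound⟩ := stmt13_general (d := 3) (r := r) (p := p) (q := 2) hr0.le (by linarith)
    (by push_cast; linarith) one_le_two ENNReal.ofNat_ne_top
  have hexp : r - 3 / p + 1 + 3 / 2 = r - 3 / p + 5 / 2 := by ring
  simp only [Nat.cast_ofNat, ENNReal.toReal_ofNat, hexp] at hbound
  exact ⟨C, hC, fun v hdiv => hbound v (v.smooth 2) (v.memLp 2 volume) hdiv⟩
end
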